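/- For every h ≥ 3 and every side assignment s : {2,…,h−1} → {up, down}, the caterpillar cubic Halin graph G(h,s) has star chromatic index exactly 5: G(h,s) admits a star 5-edge coloring but admits no star 4-edge coloring. -/

import Mathlib

/-- A star `k`-edge coloring of a simple graph `G`: a proper edge coloring with colors
`0, …, k-1` such that the edges of every path of length 4 and of every cycle of length 4
receive at least 3 distinct colors. -/
def IsStarEdgeColoring {V : Type*} (G : SimpleGraph V) (k : ℕ) (c : Sym2 V → ℕ) : Prop :=
  (∀ e ∈ G.edgeSet, c e < k) ∧
  (∀ a b b' : V, G.Adj a b → G.Adj a b' → b ≠ b' → c s(a, b) ≠ c s(a, b')) ∧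
  (∀ v0 v1 v2 v3 v4 : V, ([v0, v1, v2, v3, v4] : List V).Nodup →
    G.Adj v0 v1 → G.Adj v1 v2 → G.Adj v2 v3 → G.Adj v3 v4 →
    3 ≤ ({c s(v0, v1), c s(v1, v2), c s(v2, v3), c s(v3, v4)} : Finset ℕ).card) ∧
  (∀ v0 v1 v2 v3 : V, ([v0, v1, v2, v3] : List V).Nodup →
    G.Adj v0 v1 → G.Adj v1 v2 → G.Adj v2 v3 → G.Adj v3 v0 →
    3 ≤ ({c s(v0, v1), c s(v1, v2), c s(v2, v3), c s(v3, v0)} : Finset ℕ).card)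

/-- Vertices of the caterpillar cubic Halin graph `G(h, s)`: `Sum.inl i` is the spine
vertex `v_{i+1}` (for `i : Fin h`) and `Sum.inr j` is the leaf `u_j` (for `j : Fin (h+2)`). -/
abbrev CatVert (h : ℕ) := Fin h ⊕ Fin (h + 2)

/-- The indices of the leaves along the exterior cycle of `G(h, s)`: `u_0`, then the
leaves `u_i` (`2 ≤ i ≤ h - 1`) with `s i = false` (down) in increasing order, then
`u_h`, `u_{h+1}`, then the leaves with `s i = true` (up) in decreasing order, then `u_1`. -/
def extCycle (h : ℕ) (s : ℕ → Bool) : List ℕ :=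
  0 :: ((List.range' 2 (h - 2)).filter fun i => s i = false) ++ [h, h + 1] ++
    ((List.range' 2 (h - 2)).filter fun i => s i = true).reverse ++ [1]

/-- Base adjacency relation of `G(h, s)`: spine edges `v_i v_{i+1}`; tree edges
`v_1 u_0`, `v_1 u_1`, `v_h u_h`, `v_h u_{h+1}`, and `v_i u_i` for `2 ≤ i ≤ h - 1`;
and the exterior cycle through the leaves, whose consecutive pairs (including the
wrap-around pair) are exactly the pairs of `extCycle h s` zipped with its rotation. -/
def catRel (h : ℕ) (s : ℕ → Bool) : CatVert h → CatVert h → Prop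
  | Sum.inl i, Sum.inl i' => i'.val = i.val + 1
  | Sum.inl i, Sum.inr j =>
      (i.val = 0 ∧ (j.val = 0 ∨ j.val = 1)) ∨
      (i.val = h - 1 ∧ (j.val = h ∨ j.val = h + 1)) ∨
      (j.val = i.val + 1 ∧ 2 ≤ j.val ∧ j.val ≤ h - 1)
  | Sum.inr j, Sum.inr j' => (j.val, j'.val) ∈ (extCycle h s).zip ((extCycle h s).rotate 1)
  | _, _ => False

/-- The caterpillar cubic Halin graph `G(h, s)`, whose characteristic tree is a
caterpillar with `h + 2` leaves, with side assignment `s` (`false` = down, `true` = up). -/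
def caterpillarHalin (h : ℕ) (s : ℕ → Bool) : SimpleGraph (CatVert h) :=
  SimpleGraph.fromRel (catRel h s)

namespace CaterpillarHalin

/-- An edge leaving the already colored part of the graph: its color, the colors of the other
two edges at its colored end, and the colors that must not occur at its other end. -/
structure Wire where
  color : Fin 5
  behind : Finset (Fin 5)
  forbidden : Finset (Fin 5)

namespace Wire

/-- The colors occurring at the colored end of a wire. -/
def colors (w : Wire) : Finset (Fin 5) := insert w.color w.behind

/-- Renaming the colors of a wire. -/
def map (f : Fin 5 → Fin 5) (w : Wire) : Wire :=
  ⟨f w.color, w.behind.image f, w.forbidden.image f⟩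

/-- `w.Weaken w'`: the wire `w'` is `w` with possibly more forbidden colors. -/
def Weaken (w w' : Wire) : Prop :=
  w'.color = w.color ∧ w'.behind = w.behind ∧ w.forbidden ⊆ w'.forbidden

instance (w w' : Wire) : Decidable (w.Weaken w') := by unfold Weaken; infer_instance

theorem mem_colors_map {f : Fin 5 → Fin 5} (hf : f.Injective) (w : Wire) (c : Fin 5) :
    f c ∈ (w.map f).colors ↔ c ∈ w.colors := by
  simp [colors, map, hf.eq_iff]

theorem mem_forbidden_map {f : Fin 5 → Fin 5} (hf : f.Injective) (w : Wire) (c : Fin 5) :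
    f c ∈ (w.map f).forbidden ↔ c ∈ w.forbidden := by
  simp [map, hf.eq_iff]

theorem Weaken.map {w w' : Wire} (f : Fin 5 → Fin 5) (h : w.Weaken w') :
    (w.map f).Weaken (w'.map f) :=
  ⟨congrArg f h.1, congrArg (Finset.image f) h.2.1, Finset.image_subset_image h.2.2⟩

theorem Weaken.colors_eq {w w' : Wire} (h : w.Weaken w') : w'.colors = w.colors := by
  simp [colors, h.1, h.2.1]

theorem Weaken.trans {w w' w'' : Wire} (h : w.Weaken w') (h' : w'.Weaken w'') : w.Weaken w'' :=
  ⟨h'.1.trans h.1, h'.2.1.trans h.2.1, h.2.2.trans h'.2.2⟩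

theorem map_map (f g : Fin 5 → Fin 5) (w : Wire) : (w.map f).map g = w.map (g ∘ f) := by
  simp [map, Finset.image_image]

end Wire

/-- `HalfRung w w' o' r`: the wire `w` ends in a new vertex with outgoing wire `w'`, which is
joined by an edge of color `r` to a new vertex with outgoing wire `o'`, and the conditions around
the end of `w` hold. -/
def HalfRung (w w' o' : Wire) (r : Fin 5) : Prop :=
  w'.behind = {w.color, r} ∧ w.color ≠ r ∧ w'.color ≠ w.color ∧ w'.color ≠ r ∧
  (∀ c ∈ w.forbidden, c ∉ w'.colors) ∧ ¬ (r ∈ w.colors ∧ w.color ∈ o'.colors) ∧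
  (w'.color ∈ w.colors → w.color ∈ w'.forbidden) ∧ (w'.color ∈ o'.colors → r ∈ w'.forbidden)

instance (w w' o' : Wire) (r : Fin 5) : Decidable (HalfRung w w' o' r) := by
  unfold HalfRung; infer_instance

theorem HalfRung.map {w w' o' : Wire} {r : Fin 5} {f : Fin 5 → Fin 5} (hf : f.Injective)
    (h : HalfRung w w' o' r) :
    HalfRung (w.map f) (w'.map f) (o'.map f) (f r) := by
  obtain ⟨h1, h2, h3, h4, h5, h6, h7, h8⟩ := h
  refine ⟨by simp [Wire.map, h1, Finset.image_insert], hf.ne h2, hf.ne h3, hf.ne h4, ?_, ?_, ?_, ?_⟩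
  · intro c hc
    obtain ⟨d, hd, rfl⟩ := Finset.mem_image.1 hc
    rw [Wire.mem_colors_map hf]
    exact h5 d hd
  · exact fun ⟨ha, hb⟩ => h6 ⟨(Wire.mem_colors_map hf _ _).1 ha, (Wire.mem_colors_map hf _ _).1 hb⟩
  · exact fun ha => (Wire.mem_forbidden_map hf _ _).2 (h7 ((Wire.mem_colors_map hf _ _).1 ha))
  · exact fun ha => (Wire.mem_forbidden_map hf _ _).2 (h8 ((Wire.mem_colors_map hf _ _).1 ha))

/-- The three wires crossing a cut of a caterpillar Halin graph: the spine edge and, on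
either side, an edge of the exterior cycle. -/
structure Cut where
  spine : Wire
  side : Bool → Wire

/-- Renaming the colors and possibly exchanging the sides of a cut. -/
def Cut.act (f : Fin 5 → Fin 5) (e : Bool) (t : Cut) : Cut :=
  ⟨t.spine.map f, fun b => (t.side (b ^^ e)).map f⟩

/-- `Step t t' b r`: the cut `t'` can follow `t` when a rung of color `r` is attached on
side `b`. -/
def Step (t t' : Cut) (b : Bool) (r : Fin 5) : Prop :=
  HalfRung t.spine t'.spine (t'.side b) r ∧
  HalfRung (t.side b) (t'.side b) t'.spine r ∧
  (t.side (!b)).Weaken (t'.side (!b))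

instance (t t' : Cut) (b : Bool) (r : Fin 5) : Decidable (Step t t' b r) := by
  unfold Step; infer_instance

theorem Step.act {t t' : Cut} {b : Bool} {r : Fin 5} {f : Fin 5 → Fin 5} (hf : f.Injective)
    (e : Bool) (h : Step t t' (b ^^ e) r) : Step (t.act f e) (t'.act f e) b (f r) := by
  refine ⟨h.1.map hf, h.2.1.map hf, ?_⟩
  have := h.2.2.map f
  rwa [← Bool.not_xor] at this

theorem Cut.act_act (f g : Fin 5 → Fin 5) (e e' : Bool) (t : Cut) :
    (t.act f e).act g e' = t.act (g ∘ f) (e' ^^ e) := by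
  simp [Cut.act, Wire.map_map]

/-- The vertex where the spine meets a triangle with edge colors `a` (on the exterior
cycle), `p false` and `p true`. -/
def spineColors (t : Cut) (p : Bool → Fin 5) : Finset (Fin 5) :=
  {t.spine.color, p false, p true}

/-- The colors at the vertex where the wire `t.side b` meets the closing triangle. -/
def sideColors (t : Cut) (a : Fin 5) (p : Bool → Fin 5) (b : Bool) : Finset (Fin 5) :=
  {(t.side b).color, a, p b}

/-- The three wires of `t` can be ended by a triangle whose exterior edge has color `a` and
whose edge from the spine to side `b` has color `p b`. -/
def Close (t : Cut) (a : Fin 5) (p : Bool → Fin 5) : Prop :=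
  p false ≠ p true ∧
  (∀ c ∈ t.spine.forbidden, c ∉ spineColors t p) ∧
  ¬ (p false ∈ sideColors t a p true ∧ p true ∈ sideColors t a p false) ∧
  ∀ b, p b ≠ a ∧ t.spine.color ≠ p b ∧ (t.side b).color ≠ a ∧ (t.side b).color ≠ p b ∧
    (∀ c ∈ (t.side b).forbidden, c ∉ sideColors t a p b) ∧
    ¬ (p b ∈ t.spine.colors ∧ t.spine.color ∈ sideColors t a p b) ∧
    ¬ (p b ∈ (t.side b).colors ∧ (t.side b).color ∈ spineColors t p) ∧
    ¬ (a ∈ (t.side b).colors ∧ (t.side b).color ∈ sideColors t a p (!b)) ∧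
    ¬ (p b ∈ sideColors t a p (!b) ∧ a ∈ spineColors t p)

instance (t : Cut) (a : Fin 5) (p : Bool → Fin 5) : Decidable (Close t a p) := by
  unfold Close; infer_instance

theorem Close.act {t : Cut} {a : Fin 5} {p : Bool → Fin 5} {f : Fin 5 → Fin 5}
    (hf : f.Injective) (e : Bool) (h : Close t a p) :
    Close (t.act f e) (f a) fun b => f (p (b ^^ e)) := by
  have hs : spineColors (t.act f e) (fun b => f (p (b ^^ e))) = (spineColors t p).image f := by
    cases e
    · simp [spineColors, Cut.act, Wire.map, Finset.image_insert]
    · simp [spineColors, Cut.act, Wire.map, Finset.image_insert, Finset.pair_comm]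
  have ho : ∀ b, sideColors (t.act f e) (f a) (fun b => f (p (b ^^ e))) b =
      (sideColors t a p (b ^^ e)).image f := by
    intro b
    simp [sideColors, Cut.act, Wire.map, Finset.image_insert]
  obtain ⟨h1, h2, h3, h4⟩ := h
  refine ⟨?_, ?_, ?_, fun b => ?_⟩
  · cases e
    · exact hf.ne h1
    · exact hf.ne h1.symm
  · intro c hc
    obtain ⟨d, hd, rfl⟩ := Finset.mem_image.1 hc
    rw [hs, hf.mem_finset_image]
    exact h2 d hd
  · rw [ho, ho, hf.mem_finset_image, hf.mem_finset_image]
    cases e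
    · exact h3
    · exact fun hh => h3 hh.symm
  · obtain ⟨k1, k2, k3, k4, k5, k6, k7, k8, k9⟩ := h4 (b ^^ e)
    refine ⟨hf.ne k1, hf.ne k2, hf.ne k3, hf.ne k4, ?_, ?_, ?_, ?_, ?_⟩
    · intro c hc
      obtain ⟨d, hd, rfl⟩ := Finset.mem_image.1 hc
      rw [ho, hf.mem_finset_image]
      exact k5 d hd
    · rw [ho]
      exact fun ⟨ha, hb⟩ => k6 ⟨(Wire.mem_colors_map hf _ _).1 ha, hf.mem_finset_image.1 hb⟩
    · rw [hs]
      exact fun ⟨ha, hb⟩ => k7 ⟨(Wire.mem_colors_map hf _ _).1 ha, hf.mem_finset_image.1 hb⟩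
    · rw [ho, Bool.not_xor]
      exact fun ⟨ha, hb⟩ => k8 ⟨(Wire.mem_colors_map hf _ _).1 ha, hf.mem_finset_image.1 hb⟩
    · rw [ho, hs, Bool.not_xor]
      exact fun ⟨ha, hb⟩ => k9 ⟨hf.mem_finset_image.1 ha, hf.mem_finset_image.1 hb⟩

/-- The wires of `t` start in a triangle whose exterior edge has color `a` and whose edge from
the spine to side `b` has color `p b`. -/
def Start (t : Cut) (a : Fin 5) (p : Bool → Fin 5) : Prop :=
  p false ≠ p true ∧ t.spine.behind = {p false, p true} ∧
  ¬ (p false ∈ (t.side true).colors ∧ p true ∈ (t.side false).colors) ∧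
  ∀ b, p b ≠ a ∧ t.spine.color ≠ p b ∧ (t.side b).color ≠ a ∧ (t.side b).color ≠ p b ∧
    (t.side b).behind = {a, p b} ∧
    (t.spine.color ∈ (t.side b).colors → p b ∈ t.spine.forbidden) ∧
    ((t.side b).color ∈ t.spine.colors → p b ∈ (t.side b).forbidden) ∧
    ((t.side b).color ∈ (t.side !b).colors → a ∈ (t.side b).forbidden) ∧
    ¬ (p b ∈ (t.side (!b)).colors ∧ a ∈ t.spine.colors)

instance (t : Cut) (a : Fin 5) (p : Bool → Fin 5) : Decidable (Start t a p) := by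
  unfold Start; infer_instance

/-- Cuts such that, up to renaming colors and exchanging sides, each of them can be followed by
another one, whatever the side of the next rung. -/
def core : Fin 10 → Cut
  | 0 => ⟨⟨0, {1, 2}, {1, 2}⟩, fun b => if b then ⟨3, {0, 2}, {0, 2}⟩ else ⟨3, {0, 1}, {0, 1}⟩⟩
  | 1 => ⟨⟨0, {1, 2}, ∅⟩, fun b => if b then ⟨3, {0, 1}, {0, 1}⟩ else ⟨1, {2, 3}, {2}⟩⟩
  | 2 => ⟨⟨0, {1, 2}, ∅⟩, fun b => if b then ⟨4, {1, 3}, {3}⟩ else ⟨3, {1, 4}, ∅⟩⟩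
  | 3 => ⟨⟨0, {1, 2}, {1}⟩, fun b => if b then ⟨3, {1, 2}, ∅⟩ else ⟨0, {2, 3}, {2}⟩⟩
  | 4 => ⟨⟨0, {1, 2}, {1}⟩, fun b => if b then ⟨3, {1, 4}, ∅⟩ else ⟨0, {2, 3}, {2}⟩⟩
  | 5 => ⟨⟨0, {1, 2}, {1}⟩, fun b => if b then ⟨1, {2, 3}, {2}⟩ else ⟨1, {0, 3}, {0}⟩⟩
  | 6 => ⟨⟨0, {1, 2}, {1}⟩, fun b => if b then ⟨3, {0, 1}, ∅⟩ else ⟨2, {0, 3}, {0, 3}⟩⟩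
  | 7 => ⟨⟨0, {1, 2}, {1}⟩, fun b => if b then ⟨4, {0, 3}, {0, 3}⟩ else ⟨3, {0, 1}, {0}⟩⟩
  | 8 => ⟨⟨0, {1, 2}, {1}⟩, fun b => if b then ⟨3, {1, 2}, {1}⟩ else ⟨3, {0, 4}, ∅⟩⟩
  | 9 => ⟨⟨0, {1, 2}, {1, 2}⟩, fun b => if b then ⟨3, {0, 2}, {0}⟩ else ⟨0, {1, 3}, {1, 3}⟩⟩

/-- How to extend a cut of `core` by a rung on a given side: the renaming, the exchange and the
index describing the next cut, and the color of the rung. -/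
def extend : Fin 10 → Bool → (Fin 5 → Fin 5) × Bool × Fin 10 × Fin 5
  | 0, false => (![3, 0, 4, 2, 1], true, 9, 4)
  | 0, true => (![3, 0, 4, 1, 2], false, 9, 4)
  | 1, false => (![1, 4, 0, 3, 2], false, 0, 4)
  | 1, true => (![3, 4, 0, 2, 1], true, 7, 4)
  | 2, false => (![3, 2, 0, 1, 4], false, 7, 2)
  | 2, true => (![4, 2, 0, 1, 3], true, 7, 2)
  | 3, false => (![2, 0, 4, 3, 1], true, 8, 4)
  | 3, true => (![2, 0, 4, 3, 1], false, 5, 4)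
  | 4, false => (![3, 0, 4, 1, 2], true, 3, 4)
  | 4, true => (![2, 0, 4, 3, 1], false, 5, 4)
  | 5, false => (![4, 3, 0, 2, 1], false, 2, 3)
  | 5, true => (![3, 0, 4, 1, 2], true, 1, 4)
  | 6, false => (![3, 4, 0, 1, 2], true, 4, 4)
  | 6, true => (![3, 0, 4, 2, 1], false, 0, 4)
  | 7, false => (![3, 2, 0, 4, 1], false, 0, 2)
  | 7, true => (![3, 2, 0, 1, 4], false, 4, 2)
  | 8, false => (![4, 2, 0, 1, 3], false, 2, 2)
  | 8, true => (![4, 2, 0, 3, 1], true, 9, 2)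
  | 9, false => (![3, 4, 0, 2, 1], true, 3, 4)
  | 9, true => (![3, 4, 0, 1, 2], false, 6, 4)

/-- How to complete a cut of `core` after a last rung on a given side: the spine wire, the new
wire on that side, the color of the rung, and the colors of the closing triangle. -/
def finish : Fin 10 → Bool → Wire × Wire × Fin 5 × Fin 5 × Fin 5 × Fin 5
  | 0, false => (⟨3, {0, 4}, {4}⟩, ⟨2, {3, 4}, ∅⟩, 4, 4, 0, 1)
  | 0, true => (⟨3, {0, 4}, {4}⟩, ⟨1, {3, 4}, ∅⟩, 4, 4, 2, 0)
  | 1, false => (⟨2, {0, 3}, {0}⟩, ⟨0, {1, 3}, {3}⟩, 3, 2, 1, 4)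
  | 1, true => (⟨3, {0, 4}, {4}⟩, ⟨2, {3, 4}, ∅⟩, 4, 4, 0, 1)
  | 2, false => (⟨3, {0, 2}, {2}⟩, ⟨1, {2, 3}, {3}⟩, 2, 2, 4, 0)
  | 2, true => (⟨4, {0, 2}, {2}⟩, ⟨1, {2, 4}, {4}⟩, 2, 2, 0, 3)
  | 3, false => (⟨2, {0, 4}, {0}⟩, ⟨1, {0, 4}, ∅⟩, 4, 0, 3, 4)
  | 3, true => (⟨2, {0, 4}, {0}⟩, ⟨0, {3, 4}, {4}⟩, 4, 1, 4, 3)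
  | 4, false => (⟨3, {0, 4}, ∅⟩, ⟨1, {0, 4}, ∅⟩, 4, 0, 4, 2)
  | 4, true => (⟨2, {0, 4}, {0}⟩, ⟨0, {3, 4}, {4}⟩, 4, 1, 4, 3)
  | 5, false => (⟨3, {0, 4}, ∅⟩, ⟨2, {1, 4}, ∅⟩, 4, 0, 1, 4)
  | 5, true => (⟨3, {0, 4}, ∅⟩, ⟨0, {1, 4}, {4}⟩, 4, 2, 4, 1)
  | 6, false => (⟨3, {0, 4}, ∅⟩, ⟨1, {2, 4}, ∅⟩, 4, 0, 4, 2)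
  | 6, true => (⟨3, {0, 2}, {2}⟩, ⟨1, {2, 3}, {3}⟩, 2, 4, 1, 0)
  | 7, false => (⟨3, {0, 4}, {4}⟩, ⟨1, {3, 4}, {3}⟩, 4, 2, 0, 1)
  | 7, true => (⟨3, {0, 2}, ∅⟩, ⟨1, {2, 4}, ∅⟩, 2, 2, 4, 0)
  | 8, false => (⟨3, {0, 2}, {2}⟩, ⟨1, {2, 3}, ∅⟩, 2, 2, 0, 4)
  | 8, true => (⟨3, {0, 4}, {4}⟩, ⟨2, {3, 4}, {3}⟩, 4, 0, 2, 1)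
  | 9, false => (⟨3, {0, 4}, ∅⟩, ⟨2, {0, 4}, ∅⟩, 4, 4, 0, 1)
  | 9, true => (⟨3, {0, 4}, {4}⟩, ⟨1, {3, 4}, ∅⟩, 4, 4, 2, 0)

theorem step_core : ∀ k b, (extend k b).1.Injective ∧
    Step (core k) ((core (extend k b).2.2.1).act (extend k b).1 (extend k b).2.1) b
      (extend k b).2.2.2 := by
  decide +kernel

theorem close_core : ∀ k b, ∃ t r a, ∃ p : Bool → Fin 5, Step (core k) t b r ∧ Close t a p := by
  have key : ∀ k b,
      let d := finish k b
      let t : Cut := ⟨d.1, fun b' => if b' = b then d.2.1 else (core k).side b'⟩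
      Step (core k) t b d.2.2.1 ∧
        Close t d.2.2.2.1 fun b' => if b' then d.2.2.2.2.2 else d.2.2.2.2.1 := by
    decide +kernel
  exact fun k b => ⟨_, _, _, _, key k b⟩

theorem start_core : Start (core 0) 0 fun b => if b then 2 else 1 := by
  decide +kernel

/-- A cut equivalent to one of those in `core`. -/
def Cut.Good (t : Cut) : Prop :=
  ∃ f : Fin 5 → Fin 5, f.Injective ∧ ∃ e k, t = (core k).act f e

theorem Cut.Good.step {t : Cut} (ht : t.Good) (b : Bool) :
    ∃ t' : Cut, t'.Good ∧ ∃ r, Step t t' b r := by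
  obtain ⟨f, hf, e, k, rfl⟩ := ht
  obtain ⟨h1, h2⟩ := step_core k (b ^^ e)
  exact ⟨_, ⟨_, hf.comp h1, _, _, Cut.act_act _ _ _ _ _⟩, _, h2.act hf e⟩

theorem Cut.Good.close {t : Cut} (ht : t.Good) (b : Bool) :
    ∃ t' r a p, Step t t' b r ∧ Close t' a p := by
  obtain ⟨f, hf, e, k, rfl⟩ := ht
  obtain ⟨t', r, a, p, h1, h2⟩ := close_core k (b ^^ e)
  exact ⟨_, _, _, _, h1.act hf e, h2.act hf e⟩

/-- A sequence of cuts and rung colors describing a star coloring of `G(h, s)`. -/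
theorem exists_cuts (h : ℕ) (hh : 3 ≤ h) (s : ℕ → Bool) :
    ∃ (t : ℕ → Cut) (r : ℕ → Fin 5) (a a' : Fin 5) (p p' : Bool → Fin 5),
      Start (t 1) a p ∧ (∀ i, 1 ≤ i → i + 1 < h → Step (t i) (t (i + 1)) (s (i + 1)) (r (i + 1))) ∧
      Close (t (h - 1)) a' p' := by
  choose f hf r hr using fun (t : {t : Cut // t.Good}) (b : Bool) => t.2.step b
  let u : ℕ → {t : Cut // t.Good} := fun n =>
    Nat.rec ⟨core 0, id, Function.injective_id, false, 0, by
      simp [Cut.act, Wire.map]⟩ (fun n v => ⟨f v (s (n + 2)), hf _ _⟩) n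
  have hu : ∀ n, Step (u n).1 (u (n + 1)).1 (s (n + 2)) (r (u n) (s (n + 2))) := fun n => hr _ _
  obtain ⟨l, rl, a', p', h1, h2⟩ := (u (h - 3)).2.close (s (h - 1))
  refine ⟨fun i => if i = h - 1 then l else (u (i - 1)).1,
    fun i => if i = h - 1 then rl else r (u (i - 2)) (s i), 0, a',
    fun b => if b then 2 else 1, p', ?_, ?_, ?_⟩
  · have h1 : 1 ≠ h - 1 := by omega
    beta_reduce
    rw [if_neg h1]
    exact start_core
  · intro i hi hi'
    have h0 : i ≠ h - 1 := by omega
    obtain ⟨n, rfl⟩ := Nat.exists_eq_add_of_le' hi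
    by_cases hn : n + 2 = h - 1
    · obtain rfl : h = n + 3 := by omega
      simpa using h1
    · have hn' : n + 1 + 1 ≠ h - 1 := hn
      simpa [hn', h0] using hu n
  · simpa using h2

/-- The side of the exterior leaf `u_j`, with `u_0`, `u_h` below and `u_1`, `u_{h+1}` above. -/
def side (h : ℕ) (s : ℕ → Bool) (j : ℕ) : Bool :=
  if j = 0 ∨ j = h then false else if j = 1 ∨ j = h + 1 then true else s j

/-- `j < m` are consecutive values of a set of natural numbers. -/
def Consecutive (P : ℕ → Bool) (j m : ℕ) : Prop :=
  j < m ∧ P j = true ∧ P m = true ∧ ∀ i, j < i → i < m → P i = false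

/-- `u_m` is the first leaf after `u_j` on the same side. -/
def Link (h : ℕ) (s : ℕ → Bool) (j m : ℕ) : Prop :=
  j < m ∧ side h s j = side h s m ∧ ∀ i, j < i → i < m → side h s i ≠ side h s m

/-- Adjacent leaves, ordered by index. -/
def Exterior (h : ℕ) (s : ℕ → Bool) (j m : ℕ) : Prop :=
  (j = 0 ∧ m = 1) ∨ (j = h ∧ m = h + 1) ∨ Link h s j m

theorem side_zero (h : ℕ) (s : ℕ → Bool) : side h s 0 = false := by simp [side]

theorem side_one {h : ℕ} (hh : 3 ≤ h) (s : ℕ → Bool) : side h s 1 = true := by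
  simp [side]; omega

theorem side_self (h : ℕ) (s : ℕ → Bool) : side h s h = false := by simp [side]

theorem side_succ (h : ℕ) (s : ℕ → Bool) : side h s (h + 1) = true := by simp [side]

theorem side_mid {h j : ℕ} (s : ℕ → Bool) (hj : 2 ≤ j) (hj' : j < h) : side h s j = s j := by
  rw [side, if_neg (by omega), if_neg (by omega)]

theorem Link.left_unique {h : ℕ} {s : ℕ → Bool} {k k' j : ℕ} (hk : Link h s k j)
    (hk' : Link h s k' j) : k = k' := by
  rcases lt_trichotomy k k' with hlt | heq | hlt
  · exact absurd hk'.2.1 (hk.2.2 _ hlt hk'.1)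
  · exact heq
  · exact absurd hk.2.1 (hk'.2.2 _ hlt hk.1)

theorem Link.right_unique {h : ℕ} {s : ℕ → Bool} {j m m' : ℕ} (hm : Link h s j m)
    (hm' : Link h s j m') : m = m' := by
  rcases lt_trichotomy m m' with hlt | heq | hlt
  · exact absurd (hm.2.1.symm.trans hm'.2.1) (hm'.2.2 _ hm.1 hlt)
  · exact heq
  · exact absurd (hm'.2.1.symm.trans hm.2.1) (hm.2.2 _ hm'.1 hlt)

theorem Link.two_le {h : ℕ} (hh : 3 ≤ h) {s : ℕ → Bool} {j m : ℕ} (hl : Link h s j m) : 2 ≤ m := by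
  obtain ⟨h1, h2, -⟩ := hl
  by_contra hm
  obtain ⟨rfl, rfl⟩ : j = 0 ∧ m = 1 := by omega
  simp [side_zero, side_one hh] at h2

theorem Link.left_lt {h : ℕ} {s : ℕ → Bool} {j m : ℕ} (hl : Link h s j m) (hm : m ≤ h + 1) :
    j < h := by
  obtain ⟨h1, h2, -⟩ := hl
  by_contra hj
  obtain ⟨rfl, rfl⟩ : j = h ∧ m = h + 1 := by omega
  simp [side_self, side_succ] at h2

theorem getLast_filter_range (P : ℕ → Bool) (n x : ℕ)
    (hx : x ∈ ((List.range n).filter P).getLast?) :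
    x < n ∧ P x = true ∧ ∀ i, x < i → i < n → P i = false := by
  induction n with
  | zero => simp at hx
  | succ n ih =>
    rw [List.range_succ, List.filter_append] at hx
    by_cases hn : P n = true
    · simp only [List.filter_cons, hn, if_true, List.filter_nil, List.getLast?_append,
        List.getLast?_singleton, Option.some_or, Option.mem_def, Option.some.injEq] at hx
      subst hx
      exact ⟨by omega, hn, fun i _ _ => by omega⟩
    · rw [List.filter_cons_of_neg hn, List.filter_nil, List.append_nil] at hx
      obtain ⟨h1, h2, h3⟩ := ih hx
      refine ⟨by omega, h2, fun i hi hi' => ?_⟩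
      rcases Nat.lt_succ_iff_lt_or_eq.1 hi' with hlt | rfl
      · exact h3 i hi hlt
      · simpa using hn

theorem isChain_filter_range (P : ℕ → Bool) (n : ℕ) :
    ((List.range n).filter P).IsChain (Consecutive P) := by
  induction n with
  | zero => simp
  | succ n ih =>
    rw [List.range_succ, List.filter_append]
    by_cases hn : P n = true
    · simp only [List.filter_cons, hn, if_true, List.filter_nil]
      refine List.isChain_append.2 ⟨ih, by simp, ?_⟩
      intro x hx y hy
      obtain rfl : n = y := by simpa using hy
      obtain ⟨h1, h2, h3⟩ := getLast_filter_range P n x hx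
      exact ⟨h1, h2, hn, h3⟩
    · simpa [List.filter_cons, hn] using ih

theorem extCycle_eq {h : ℕ} (hh : 3 ≤ h) (s : ℕ → Bool) :
    extCycle h s = (List.range (h + 2)).filter (fun j => !side h s j) ++
      ((List.range (h + 2)).filter (fun j => side h s j)).reverse := by
  have hr : List.range (h + 2) = 0 :: 1 :: (List.range' 2 (h - 2) ++ [h, h + 1]) := by
    obtain ⟨n, rfl⟩ := Nat.exists_eq_add_of_le' (show 2 ≤ h by omega)
    rw [List.range_succ, List.range_succ, List.range_eq_range', List.range'_succ, List.range'_succ]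
    simp
  have h1 : (List.range' 2 (h - 2)).filter (fun j => !side h s j) =
      (List.range' 2 (h - 2)).filter fun i => s i = false := by
    refine List.filter_congr fun i hi => ?_
    rw [List.mem_range'_1] at hi
    rw [side_mid s hi.1 (by omega)]
    cases s i <;> rfl
  have h2 : (List.range' 2 (h - 2)).filter (fun j => side h s j) =
      (List.range' 2 (h - 2)).filter fun i => s i = true := by
    refine List.filter_congr fun i hi => ?_
    rw [List.mem_range'_1] at hi
    rw [side_mid s hi.1 (by omega)]
    cases s i <;> rfl
  rw [hr]
  simp only [List.filter_cons, List.filter_append, h1, h2, side_zero, side_one hh, side_self,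
    side_succ, extCycle, List.filter_nil]
  simp

theorem getLast?_extCycle (h : ℕ) (s : ℕ → Bool) : (extCycle h s).getLast? = some 1 := by
  rw [extCycle]
  exact List.getLast?_concat

theorem rel_of_mem_zip {α : Type*} {R : α → α → Prop} {a x y : α} {l : List α}
    (hl : (l ++ [a]).IsChain R) (hxy : (x, y) ∈ l.zip (l.tail ++ [a])) : R x y := by
  induction l with
  | nil => simp at hxy
  | cons b l ih =>
    cases l with
    | nil =>
      obtain ⟨rfl, rfl⟩ : x = b ∧ y = a := by simpa using hxy
      simpa using hl
    | cons b' l =>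
      simp only [List.cons_append, List.tail_cons, List.isChain_cons_cons, List.zip_cons_cons,
        List.mem_cons, Prod.mk.injEq] at hl hxy
      rcases hxy with ⟨rfl, rfl⟩ | hxy
      · exact hl.1
      · exact ih (by simpa using hl.2) (by simpa using hxy)

theorem exterior_of_mem_zip {h : ℕ} (hh : 3 ≤ h) {s : ℕ → Bool} {j m : ℕ}
    (hjm : (j, m) ∈ (extCycle h s).zip ((extCycle h s).rotate 1)) :
    Exterior h s j m ∨ Exterior h s m j := by
  have hrot : (extCycle h s).rotate 1 = (extCycle h s).tail ++ [0] := by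
    simp [extCycle]
  rw [hrot] at hjm
  refine rel_of_mem_zip (R := fun j m => Exterior h s j m ∨ Exterior h s m j) ?_ hjm
  have hD := isChain_filter_range (fun j => !side h s j) (h + 2)
  have hU := isChain_filter_range (fun j => side h s j) (h + 2)
  rw [extCycle_eq hh]
  refine List.isChain_append.2 ⟨List.isChain_append.2 ⟨?_, List.isChain_reverse.2 ?_, ?_⟩,
    by simp, ?_⟩
  · refine hD.imp fun x y hxy => Or.inl (Or.inr (Or.inr ?_))
    obtain ⟨h1, h2, h3, h4⟩ := hxy
    simp only [Bool.not_eq_true', Bool.not_eq_false'] at h2 h3 h4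
    exact ⟨h1, h2.trans h3.symm, fun i hi hi' => by simp [h4 i hi hi', h3]⟩
  · refine hU.imp fun x y hxy => Or.inr (Or.inr (Or.inr ?_))
    obtain ⟨h1, h2, h3, h4⟩ := hxy
    exact ⟨h1, h2.trans h3.symm, fun i hi hi' => by simp [h4 i hi hi', h3]⟩
  · intro x hx y hy
    rw [List.head?_reverse] at hy
    obtain ⟨hx1, hx2, hx3⟩ := getLast_filter_range _ _ _ hx
    obtain ⟨hy1, hy2, hy3⟩ := getLast_filter_range _ _ _ hy
    have e1 : x = h := by
      by_contra hne
      by_cases hx' : x = h + 1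
      · simp [hx', side_succ] at hx2
      · simpa [side_self] using hx3 h (by omega) (by omega)
    have e2 : y = h + 1 := by
      by_contra hne
      simpa [side_succ] using hy3 (h + 1) (by omega) (by omega)
    exact Or.inl (Or.inr (Or.inl ⟨e1, e2⟩))
  · intro x hx y hy
    have e : extCycle h s = _ := extCycle_eq hh s
    rw [← e, getLast?_extCycle] at hx
    obtain rfl : 0 = y := by simpa using hy
    obtain rfl : 1 = x := by simpa using hx
    exact Or.inr (Or.inl ⟨rfl, rfl⟩)

theorem adj_spine {h : ℕ} {s : ℕ → Bool} {i i' : Fin h} :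
    (caterpillarHalin h s).Adj (Sum.inl i) (Sum.inl i') ↔
      i'.val = i.val + 1 ∨ i.val = i'.val + 1 := by
  simp only [caterpillarHalin, SimpleGraph.fromRel_adj, catRel, ne_eq, Sum.inl.injEq, Fin.ext_iff]
  omega

theorem adj_rung {h : ℕ} (hh : 3 ≤ h) {s : ℕ → Bool} {i : Fin h} {j : Fin (h + 2)} :
    (caterpillarHalin h s).Adj (Sum.inl i) (Sum.inr j) ↔ i.val = min (j.val - 1) (h - 1) := by
  simp only [caterpillarHalin, SimpleGraph.fromRel_adj, catRel, ne_eq, reduceCtorEq,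
    not_false_eq_true, true_and, or_false]
  omega

theorem exterior_of_adj {h : ℕ} (hh : 3 ≤ h) {s : ℕ → Bool} {j m : Fin (h + 2)}
    (hjm : (caterpillarHalin h s).Adj (Sum.inr j) (Sum.inr m)) :
    Exterior h s j m ∨ Exterior h s m j := by
  simp only [caterpillarHalin, SimpleGraph.fromRel_adj, catRel] at hjm
  rcases hjm.2 with h1 | h1
  · exact exterior_of_mem_zip hh h1
  · exact (exterior_of_mem_zip hh h1).symm

theorem nodup_extCycle {h : ℕ} (hh : 3 ≤ h) (s : ℕ → Bool) : (extCycle h s).Nodup := by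
  rw [extCycle_eq hh]
  refine List.nodup_append.2 ⟨List.nodup_range.filter _,
    List.nodup_reverse.2 (List.nodup_range.filter _), ?_⟩
  rintro x hx y hy rfl
  simp only [List.mem_reverse, List.mem_filter] at hx hy
  simp [hy.2] at hx

theorem length_extCycle {h : ℕ} (hh : 3 ≤ h) (s : ℕ → Bool) : (extCycle h s).length = h + 2 := by
  rw [extCycle_eq hh, List.length_append, List.length_reverse, Nat.add_comm]
  have := List.length_eq_length_filter_add (l := List.range (h + 2)) (fun j => side h s j)
  rw [List.length_range] at this
  exact this.symm

theorem lt_of_mem_extCycle {h : ℕ} (hh : 3 ≤ h) {s : ℕ → Bool} {j : ℕ}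
    (hj : j ∈ extCycle h s) : j < h + 2 := by
  rw [extCycle_eq hh, List.mem_append, List.mem_reverse, List.mem_filter, List.mem_filter,
    List.mem_range] at hj
  omega

/-- The exterior cycle as an injective sequence of leaves from `u_0` to `u_1`. -/
theorem exists_exterior_sequence {h : ℕ} (hh : 3 ≤ h) (s : ℕ → Bool) :
    ∃ f : ℕ → Fin (h + 2), (f 0).val = 0 ∧ (f (h + 1)).val = 1 ∧
      (∀ n < h + 2, ∀ m < h + 2, f n = f m → n = m) ∧
      ∀ n < h + 1, (caterpillarHalin h s).Adj (Sum.inr (f n)) (Sum.inr (f (n + 1))) := by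
  have hlen := length_extCycle hh s
  have hnd := nodup_extCycle hh s
  have hget : ∀ n < h + 2, (extCycle h s).getD n 0 < h + 2 := by
    intro n hn
    rw [List.getD_eq_getElem _ _ (by omega)]
    exact lt_of_mem_extCycle hh (List.getElem_mem _)
  have hinj : ∀ n < h + 2, ∀ m < h + 2,
      (extCycle h s).getD n 0 = (extCycle h s).getD m 0 → n = m := by
    intro n hn m hm hnm
    rw [List.getD_eq_getElem _ _ (by omega), List.getD_eq_getElem _ _ (by omega)] at hnm
    exact (List.Nodup.getElem_inj_iff hnd).1 hnm
  let f : ℕ → Fin (h + 2) := fun n =>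
    if hn : n < h + 2 then ⟨(extCycle h s).getD n 0, hget n hn⟩ else 0
  have hf : ∀ n < h + 2, (f n).val = (extCycle h s).getD n 0 := fun n hn => by simp [f, hn]
  refine ⟨f, ?_, ?_, ?_, ?_⟩
  · rw [hf 0 (by omega)]
    simp [extCycle]
  · rw [hf (h + 1) (by omega)]
    have e := getLast?_extCycle h s
    rw [List.getLast?_eq_getElem?, hlen] at e
    simpa [List.getD_eq_getElem?_getD] using congrArg (Option.getD · 0) e
  · intro n hn m hm hnm
    exact hinj n hn m hm (by rw [← hf n hn, ← hf m hm, hnm])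
  · intro n hn
    simp only [caterpillarHalin, SimpleGraph.fromRel_adj, ne_eq, Sum.inr.injEq, catRel]
    refine ⟨fun hnm => ?_, Or.inl ?_⟩
    · have := hinj n (by omega) (n + 1) (by omega)
        (by rw [← hf n (by omega), ← hf (n + 1) (by omega), hnm])
      omega
    · rw [hf n (by omega), hf (n + 1) (by omega), List.mem_iff_getElem]
      refine ⟨n, by simp [hlen]; omega, ?_⟩
      rw [List.getElem_zip, List.getElem_rotate, List.getD_eq_getElem _ _ (by omega),
        List.getD_eq_getElem _ _ (by omega)]
      simp only [hlen, Nat.mod_eq_of_lt (show n + 1 < h + 2 by omega)]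

/-- In a star edge coloring no non-backtracking walk of length 4 has alternating colors. -/
theorem not_alternating {V : Type*} {G : SimpleGraph V} {k : ℕ} {c : Sym2 V → ℕ}
    (hc : IsStarEdgeColoring G k c) {v0 v1 v2 v3 v4 : V} (h01 : G.Adj v0 v1) (h12 : G.Adj v1 v2)
    (h23 : G.Adj v2 v3) (h34 : G.Adj v3 v4) (h02 : v0 ≠ v2) (h13 : v1 ≠ v3) (h24 : v2 ≠ v4)
    (e1 : c s(v0, v1) = c s(v2, v3)) (e2 : c s(v1, v2) = c s(v3, v4)) : False := by
  obtain ⟨-, hprop, hpath, hcycle⟩ := hc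
  have card_le : ∀ a b : ℕ, ¬ 3 ≤ ({a, b, a, b} : Finset ℕ).card := by
    intro a b
    have : ({a, b, a, b} : Finset ℕ) = {a, b} := by ext; simp
    rw [this]
    have := Finset.card_le_two (a := a) (b := b)
    omega
  by_cases h03 : v0 = v3
  · subst h03
    exact hprop v0 v1 v2 h01 h23.symm h12.ne (e1.trans (by rw [Sym2.eq_swap]))
  by_cases h14 : v1 = v4
  · subst h14
    exact hprop v1 v2 v3 h12 h34.symm h23.ne (e2.trans (by rw [Sym2.eq_swap]))
  by_cases h04 : v0 = v4
  · subst h04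
    have := hcycle v0 v1 v2 v3 (by simp [h01.ne, h02, h03, h12.ne, h13, h23.ne]) h01 h12 h23 h34
    rw [← e1, ← e2] at this
    exact card_le _ _ this
  · have := hpath v0 v1 v2 v3 v4
      (by simp [h01.ne, h02, h03, h04, h12.ne, h13, h14, h23.ne, h24, h34.ne]) h01 h12 h23 h34
    rw [← e1, ← e2] at this
    exact card_le _ _ this

/-- In a star 4-edge coloring, the edge leaving a triangle at `x` is colored differently from the
edge of the triangle opposite to `x`. -/
theorem pendant_ne_opposite {V : Type*} {G : SimpleGraph V} {c : Sym2 V → ℕ}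
    (hc : IsStarEdgeColoring G 4 c) {x y z p m n : V} (hxy : G.Adj x y) (hxz : G.Adj x z)
    (hyz : G.Adj y z) (hxp : G.Adj x p) (hpm : G.Adj p m) (hpn : G.Adj p n) (hmn : m ≠ n)
    (hpy : p ≠ y) (hpz : p ≠ z) (hmx : m ≠ x) (hnx : n ≠ x) : c s(x, p) ≠ c s(y, z) := by
  intro heq
  have avoid : ∀ w, G.Adj p w → w ≠ x → c s(p, w) ≠ c s(x, y) ∧ c s(p, w) ≠ c s(x, z) := by
    intro w hw hwx
    constructor
    · intro e
      refine not_alternating hc hw.symm hxp.symm hxy hyz hwx hpy hxz.ne ?_ ?_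
      · rw [← e, Sym2.eq_swap]
      · rw [← heq, Sym2.eq_swap]
    · intro e
      refine not_alternating hc hw.symm hxp.symm hxz hyz.symm hwx hpz hxy.ne ?_ ?_
      · rw [← e, Sym2.eq_swap]
      · rw [Sym2.eq_swap, heq, Sym2.eq_swap]
  have hm := avoid m hpm hmx
  have hn := avoid n hpn hnx
  have lt : ∀ {u v : V}, G.Adj u v → c s(u, v) < 4 := fun huv => hc.1 _ huv
  have l1 := lt hxy
  have l2 := lt hxz
  have l3 := lt hxp
  have l4 := lt hpm
  have l5 := lt hpn
  have n1 := hc.2.1 x y z hxy hxz hyz.ne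
  have n2 := hc.2.1 x p y hxp hxy hpy
  have n3 := hc.2.1 x p z hxp hxz hpz
  have n4 := hc.2.1 p m n hpm hpn hmn
  have n5 := hc.2.1 p x m hxp.symm hpm hmx.symm
  have n6 := hc.2.1 p x n hxp.symm hpn hnx.symm
  rw [Sym2.eq_swap] at n5 n6
  omega

/-- A graph with a triangle each of whose vertices has a further neighbor of degree at least 3
outside the triangle has no star 4-edge coloring. -/
theorem not_star_four_of_triangle {V : Type*} {G : SimpleGraph V} {c : Sym2 V → ℕ} (x : Fin 3 → V)
    (p m n : Fin 3 → V) (hx : ∀ i j, i ≠ j → G.Adj (x i) (x j))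
    (hxp : ∀ i, G.Adj (x i) (p i)) (hpm : ∀ i, G.Adj (p i) (m i)) (hpn : ∀ i, G.Adj (p i) (n i))
    (hmn : ∀ i, m i ≠ n i) (hpx : ∀ i j, p i ≠ x j) (hmx : ∀ i, m i ≠ x i) (hnx : ∀ i, n i ≠ x i) :
    ¬ IsStarEdgeColoring G 4 c := by
  intro hc
  have opp : ∀ i j k, i ≠ j → i ≠ k → j ≠ k → c s(x i, p i) ≠ c s(x j, x k) :=
    fun i j k hij hik hjk => pendant_ne_opposite hc (hx i j hij) (hx i k hik) (hx j k hjk) (hxp i)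
      (hpm i) (hpn i) (hmn i) (hpx i j) (hpx i k) (hmx i) (hnx i)
  have lt : ∀ {u v : V}, G.Adj u v → c s(u, v) < 4 := fun huv => hc.1 _ huv
  have near : ∀ i j, i ≠ j → c s(x i, p i) ≠ c s(x i, x j) :=
    fun i j hij => hc.2.1 _ _ _ (hxp i) (hx i j hij) (hpx i j)
  have a01 : (0 : Fin 3) ≠ 1 := by decide
  have a02 : (0 : Fin 3) ≠ 2 := by decide
  have a12 : (1 : Fin 3) ≠ 2 := by decide
  have t1 := hc.2.1 _ _ _ (hx 0 1 a01) (hx 0 2 a02) (hx 1 2 a12).ne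
  have t2 := hc.2.1 _ _ _ (hx 1 0 a01.symm) (hx 1 2 a12) (hx 0 2 a02).ne
  have t3 := hc.2.1 _ _ _ (hx 2 0 a02.symm) (hx 2 1 a12.symm) (hx 0 1 a01).ne
  have o0 := opp 0 1 2 a01 a02 a12
  have o1 := opp 1 0 2 a01.symm a12 a02
  have o2 := opp 2 0 1 a02.symm a12.symm a01
  have b01 := near 0 1 a01
  have b02 := near 0 2 a02
  have b10 := near 1 0 a01.symm
  have b12 := near 1 2 a12
  have b20 := near 2 0 a02.symm
  have b21 := near 2 1 a12.symm
  have l01 := lt (hx 0 1 a01)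
  have l02 := lt (hx 0 2 a02)
  have l12 := lt (hx 1 2 a12)
  have l0 := lt (hxp 0)
  have l1 := lt (hxp 1)
  have l2 := lt (hxp 2)
  have s10 : s(x 1, x 0) = s(x 0, x 1) := Sym2.eq_swap
  have s20 : s(x 2, x 0) = s(x 0, x 2) := Sym2.eq_swap
  have s21 : s(x 2, x 1) = s(x 1, x 2) := Sym2.eq_swap
  rw [s10] at t2 b10
  rw [s20, s21] at t3
  rw [s20] at b20
  rw [s21] at b21
  have e1 : c s(x 0, p 0) = c s(x 1, p 1) := by omega
  have e2 : c s(x 0, p 0) = c s(x 2, p 2) := by omega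
  have avoid : ∀ w, G.Adj (p 0) w → w ≠ x 0 → c s(p 0, w) = c s(x 1, x 2) := by
    intro w hw hwx
    have lw := lt hw
    have w0 := hc.2.1 _ _ _ hw (hxp 0).symm hwx
    have w1 : c s(p 0, w) ≠ c s(x 0, x 1) := by
      intro e
      refine not_alternating hc hw.symm (hxp 0).symm (hx 0 1 a01) (hxp 1) hwx (hpx 0 1)
        (hpx 1 0).symm ?_ ?_
      · rw [← e, Sym2.eq_swap]
      · rw [← e1, Sym2.eq_swap]
    have w2 : c s(p 0, w) ≠ c s(x 0, x 2) := by
      intro e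
      refine not_alternating hc hw.symm (hxp 0).symm (hx 0 2 a02) (hxp 2) hwx (hpx 0 2)
        (hpx 2 0).symm ?_ ?_
      · rw [← e, Sym2.eq_swap]
      · rw [← e2, Sym2.eq_swap]
    rw [show s(p 0, x 0) = s(x 0, p 0) from Sym2.eq_swap] at w0
    omega
  exact hc.2.1 _ _ _ (hpm 0) (hpn 0) (hmn 0)
    ((avoid _ (hpm 0) (hmx 0)).trans (avoid _ (hpn 0) (hnx 0)).symm)

theorem not_star_four {h : ℕ} (hh : 3 ≤ h) (s : ℕ → Bool) (c : Sym2 (CatVert h) → ℕ) :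
    ¬ IsStarEdgeColoring (caterpillarHalin h s) 4 c := by
  obtain ⟨f, f0, f1, finj, fadj⟩ := exists_exterior_sequence hh s
  have fne : ∀ n < h + 2, ∀ m < h + 2, n ≠ m → (f n).val ≠ (f m).val :=
    fun n hn m hm hnm e => hnm (finj n hn m hm (Fin.ext e))
  have rung : ∀ j : Fin (h + 2), (caterpillarHalin h s).Adj (Sum.inr j)
      (Sum.inl ⟨min (j.val - 1) (h - 1), by omega⟩) :=
    fun j => ((adj_rung hh).2 rfl).symm
  have spine : ∀ i (hi : i + 1 < h), (caterpillarHalin h s).Adj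
      (Sum.inl ⟨i, by omega⟩) (Sum.inl ⟨i + 1, hi⟩) := fun i hi => adj_spine.2 (Or.inl rfl)
  have g1 := fne 1 (by omega) 0 (by omega) (by omega)
  have g2 := fne 1 (by omega) (h + 1) (by omega) (by omega)
  have g3 := fne h (by omega) 0 (by omega) (by omega)
  have g4 := fne h (by omega) (h + 1) (by omega) (by omega)
  have g6 := fne 2 (by omega) 0 (by omega) (by omega)
  have g7 := fne (h - 1) (by omega) (h + 1) (by omega) (by omega)
  have wrap : (caterpillarHalin h s).Adj (Sum.inr (f (h + 1))) (Sum.inr (f 0)) := by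
    simp only [caterpillarHalin, SimpleGraph.fromRel_adj, ne_eq, Sum.inr.injEq, Fin.ext_iff,
      catRel, f0, f1]
    refine ⟨by omega, Or.inl ?_⟩
    have hlen := length_extCycle hh s
    have e := getLast?_extCycle h s
    rw [List.getLast?_eq_getElem?, hlen] at e
    obtain ⟨_, e'⟩ := List.getElem?_eq_some_iff.1 e
    rw [List.mem_iff_getElem]
    refine ⟨h + 1, by simp [hlen], ?_⟩
    rw [List.getElem_zip, List.getElem_rotate]
    simp only [hlen, show h + 1 + 1 = h + 2 from rfl, Nat.mod_self]
    exact Prod.ext e' (by simp [extCycle])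
  have fh := fadj h (by omega)
  have fh' := fadj (h - 1) (by omega)
  rw [Nat.sub_add_cancel (by omega)] at fh'
  have r0 := rung (f 0)
  have r1 := rung (f (h + 1))
  have e0 : (⟨min ((f 0).val - 1) (h - 1), by omega⟩ : Fin h) = ⟨0, by omega⟩ :=
    Fin.ext (by simp [f0])
  have e1 : (⟨min ((f (h + 1)).val - 1) (h - 1), by omega⟩ : Fin h) = ⟨0, by omega⟩ :=
    Fin.ext (by simp [f1])
  rw [e0] at r0
  rw [e1] at r1
  refine not_star_four_of_triangle
    ![Sum.inr (f 0), Sum.inr (f (h + 1)), Sum.inl ⟨0, by omega⟩]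
    ![Sum.inr (f 1), Sum.inr (f h), Sum.inl ⟨1, by omega⟩]
    ![Sum.inr (f 2), Sum.inr (f (h - 1)), Sum.inl ⟨2, by omega⟩]
    ![Sum.inl ⟨min ((f 1).val - 1) (h - 1), by omega⟩,
      Sum.inl ⟨min ((f h).val - 1) (h - 1), by omega⟩, Sum.inr ⟨2, by omega⟩]
    ?_ ?_ ?_ ?_ ?_ ?_ ?_ ?_
  · intro i j hij
    fin_cases i <;> fin_cases j
    · exact absurd rfl hij
    · exact wrap.symm
    · exact r0
    · exact wrap
    · exact absurd rfl hij
    · exact r1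
    · exact r0.symm
    · exact r1.symm
    · exact absurd rfl hij
  · intro i
    fin_cases i
    · exact fadj 0 (by omega)
    · exact fh.symm
    · exact spine 0 (by omega)
  · intro i
    fin_cases i
    · exact fadj 1 (by omega)
    · exact fh'.symm
    · exact spine 1 (by omega)
  · intro i
    fin_cases i
    · exact rung (f 1)
    · exact rung (f h)
    · exact (adj_rung hh).2 (by simp; omega)
  · intro i
    fin_cases i <;> simp
  · intro i j
    fin_cases i <;> fin_cases j <;> simp [Fin.ext_iff] <;> omega
  · intro i
    fin_cases i <;> simp [Fin.ext_iff] <;> omega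
  · intro i
    fin_cases i <;> simp

/-- The cuts of a caterpillar Halin graph together with the colors of its rungs and of the
triangles at its two ends. -/
structure Scheme (h : ℕ) (s : ℕ → Bool) where
  three_le : 3 ≤ h
  cut : ℕ → Cut
  rib : ℕ → Fin 5
  base : Fin 5
  cap : Fin 5
  basePair : Bool → Fin 5
  capPair : Bool → Fin 5
  start : Start (cut 1) base basePair
  step : ∀ i, 1 ≤ i → i + 1 < h → Step (cut i) (cut (i + 1)) (s (i + 1)) (rib (i + 1))
  close : Close (cut (h - 1)) cap capPair

theorem exists_scheme {h : ℕ} (hh : 3 ≤ h) (s : ℕ → Bool) : Nonempty (Scheme h s) := by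
  obtain ⟨t, r, a, a', p, p', h1, h2, h3⟩ := exists_cuts h hh s
  exact ⟨⟨hh, t, r, a, a', p, p', h1, h2, h3⟩⟩

/-- Two edges at a vertex, given by their colors and the color sets at their other ends, have
different colors and are not the middle of a bi-colored walk of length 4. -/
def Compatible (x y : Fin 5 × Finset (Fin 5)) : Prop :=
  x.1 ≠ y.1 ∧ ¬ (y.1 ∈ x.2 ∧ x.1 ∈ y.2)

theorem Compatible.symm {x y : Fin 5 × Finset (Fin 5)} (hxy : Compatible x y) : Compatible y x :=
  ⟨hxy.1.symm, fun h => hxy.2 h.symm⟩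

theorem HalfRung.compatible {w w' o' : Wire} {r : Fin 5} {F : Finset (Fin 5)}
    (hr : HalfRung w w' o' r) (hF : ∀ c ∈ w'.forbidden, c ∉ F) :
    Compatible (w.color, w.colors) (r, o'.colors) ∧
      Compatible (w.color, w.colors) (w'.color, F) ∧ Compatible (r, o'.colors) (w'.color, F) := by
  obtain ⟨-, h2, h3, h4, -, h6, h7, h8⟩ := hr
  exact ⟨⟨h2, h6⟩, ⟨h3.symm, fun h => hF _ (h7 h.1) h.2⟩, ⟨h4.symm, fun h => hF _ (h8 h.1) h.2⟩⟩

theorem compatible_of_three {V : Type*} {N P Q R : V → Prop} {f : V → Fin 5 × Finset (Fin 5)}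
    (hN : ∀ v, N v → P v ∨ Q v ∨ R v) (hP : ∀ v w, P v → P w → v = w)
    (hQ : ∀ v w, Q v → Q w → v = w) (hR : ∀ v w, R v → R w → v = w)
    (hPQ : ∀ v w, P v → Q w → Compatible (f v) (f w))
    (hPR : ∀ v w, P v → R w → Compatible (f v) (f w))
    (hQR : ∀ v w, Q v → R w → Compatible (f v) (f w)) :
    ∀ v w, N v → N w → v ≠ w → Compatible (f v) (f w) := by
  intro v w hv hw hvw
  rcases hN v hv with h1 | h1 | h1 <;> rcases hN w hw with h2 | h2 | h2
  · exact absurd (hP v w h1 h2) hvw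
  · exact hPQ v w h1 h2
  · exact hPR v w h1 h2
  · exact (hPQ w v h2 h1).symm
  · exact absurd (hQ v w h1 h2) hvw
  · exact hQR v w h1 h2
  · exact (hPR w v h2 h1).symm
  · exact (hQR w v h2 h1).symm
  · exact absurd (hR v w h1 h2) hvw

/-- A local criterion for star edge colorings. -/
theorem isStarEdgeColoring_of_compatible {V : Type*} {G : SimpleGraph V} {f : Sym2 V → Fin 5}
    {C : V → Finset (Fin 5)} (hC : ∀ v w, G.Adj v w → f s(v, w) ∈ C v)
    (hf : ∀ v p q, G.Adj v p → G.Adj v q → p ≠ q →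
      Compatible (f s(v, p), C p) (f s(v, q), C q)) :
    IsStarEdgeColoring G 5 fun e => (f e).val := by
  have card : ∀ a b c d : Fin 5, a ≠ b → b ≠ c → c ≠ d → ¬ (a = c ∧ b = d) →
      3 ≤ ({a.val, b.val, c.val, d.val} : Finset ℕ).card := by
    decide
  have walk : ∀ v0 v1 v2 v3 v4 : V, v0 ≠ v2 → v1 ≠ v3 → v2 ≠ v4 → G.Adj v0 v1 → G.Adj v1 v2 →
      G.Adj v2 v3 → G.Adj v3 v4 →
      3 ≤ ({(f s(v0, v1)).val, (f s(v1, v2)).val, (f s(v2, v3)).val, (f s(v3, v4)).val} :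
        Finset ℕ).card := by
    intro v0 v1 v2 v3 v4 h02 h13 h24 h01 h12 h23 h34
    refine card _ _ _ _ ?_ ?_ ?_ ?_
    · rw [Sym2.eq_swap]
      exact (hf v1 v0 v2 h01.symm h12 h02).1
    · rw [Sym2.eq_swap]
      exact (hf v2 v1 v3 h12.symm h23 h13).1
    · rw [Sym2.eq_swap]
      exact (hf v3 v2 v4 h23.symm h34 h24).1
    · rintro ⟨e1, e2⟩
      refine (hf v2 v1 v3 h12.symm h23 h13).2 ⟨?_, ?_⟩
      · change f s(v2, v3) ∈ C v1
        rw [← e1, Sym2.eq_swap]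
        exact hC v1 v0 h01.symm
      · change f s(v2, v1) ∈ C v3
        rw [Sym2.eq_swap, e2]
        exact hC v3 v4 h34
  refine ⟨fun e _ => (f e).isLt, fun a b b' hb hb' hne e => (hf a b b' hb hb' hne).1 (Fin.ext e),
    fun v0 v1 v2 v3 v4 hnd h01 h12 h23 h34 => ?_, fun v0 v1 v2 v3 hnd h01 h12 h23 h30 => ?_⟩
  · simp only [List.nodup_cons, List.mem_cons, not_or] at hnd
    exact walk v0 v1 v2 v3 v4 hnd.1.2.1 hnd.2.1.2.1 hnd.2.2.1.2.1 h01 h12 h23 h34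
  · simp only [List.nodup_cons, List.mem_cons, not_or] at hnd
    exact walk v0 v1 v2 v3 v0 hnd.1.2.1 hnd.2.1.2.1 (Ne.symm hnd.1.2.1) h01 h12 h23 h30

namespace Scheme

/-- The wire of the exterior cycle that leaves `u_j` towards larger indices. -/
def outer {h : ℕ} {s : ℕ → Bool} (D : Scheme h s) (j : ℕ) : Wire :=
  (D.cut (max j 1)).side (side h s j)

/-- The color of the tree edge at the leaf `u_j`. -/
def rung {h : ℕ} {s : ℕ → Bool} (D : Scheme h s) (j : ℕ) : Fin 5 :=
  if j = 0 then D.basePair false else if j = 1 then D.basePair true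
  else if j = h then D.capPair false else if j = h + 1 then D.capPair true else D.rib j

/-- The color of the edge between the leaves `u_j` and `u_m`, where `j < m`. -/
def exteriorColor {h : ℕ} {s : ℕ → Bool} (D : Scheme h s) (j m : ℕ) : Fin 5 :=
  if m = 1 then D.base else if j = h then D.cap else (D.outer j).color

/-- The colors at the spine vertex `v_i`. -/
def spineSet {h : ℕ} {s : ℕ → Bool} (D : Scheme h s) (i : ℕ) : Finset (Fin 5) :=
  if i = h then spineColors (D.cut (h - 1)) D.capPair else (D.cut i).spine.colors

/-- The colors at the leaf `u_j`. -/
def leafSet {h : ℕ} {s : ℕ → Bool} (D : Scheme h s) (j : ℕ) : Finset (Fin 5) :=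
  if j = h then sideColors (D.cut (h - 1)) D.cap D.capPair false
  else if j = h + 1 then sideColors (D.cut (h - 1)) D.cap D.capPair true else (D.outer j).colors

/-- The color of the edge between two adjacent vertices. -/
def color {h : ℕ} {s : ℕ → Bool} (D : Scheme h s) : CatVert h → CatVert h → Fin 5
  | Sum.inl i, Sum.inl i' => (D.cut (min i.val i'.val + 1)).spine.color
  | Sum.inl _, Sum.inr j => D.rung j
  | Sum.inr j, Sum.inl _ => D.rung j
  | Sum.inr j, Sum.inr m => D.exteriorColor (min j.val m.val) (max j.val m.val)

/-- The colors at a vertex. -/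
def vertexColors {h : ℕ} {s : ℕ → Bool} (D : Scheme h s) : CatVert h → Finset (Fin 5)
  | Sum.inl i => D.spineSet (i.val + 1)
  | Sum.inr j => D.leafSet j

theorem color_comm {h : ℕ} {s : ℕ → Bool} (D : Scheme h s) (v w : CatVert h) :
    D.color v w = D.color w v := by
  rcases v with i | j <;> rcases w with i' | j' <;> simp [color, min_comm, max_comm]

/-- The color of the edge from `v` to `w` and the colors at `w`. -/
def dart {h : ℕ} {s : ℕ → Bool} (D : Scheme h s) (v w : CatVert h) : Fin 5 × Finset (Fin 5) :=
  (D.color v w, D.vertexColors w)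

theorem side_toNat {h : ℕ} (hh : 3 ≤ h) (s : ℕ → Bool) (b : Bool) : side h s b.toNat = b := by
  cases b
  · exact side_zero h s
  · exact side_one hh s

theorem side_add_toNat (h : ℕ) (s : ℕ → Bool) (b : Bool) : side h s (h + b.toNat) = b := by
  cases b
  · exact side_self h s
  · exact side_succ h s

theorem outer_toNat {h : ℕ} {s : ℕ → Bool} (D : Scheme h s) (b : Bool) :
    D.outer b.toNat = (D.cut 1).side b := by
  rw [outer, side_toNat D.three_le, max_eq_right (Bool.toNat_le b)]

theorem outer_of_pos {h : ℕ} {s : ℕ → Bool} (D : Scheme h s) {j : ℕ} (hj : 1 ≤ j) :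
    D.outer j = (D.cut j).side (side h s j) := by
  rw [outer, max_eq_left hj]

theorem rung_toNat {h : ℕ} {s : ℕ → Bool} (D : Scheme h s) (b : Bool) :
    D.rung b.toNat = D.basePair b := by
  cases b <;> simp [rung]

theorem rung_add_toNat {h : ℕ} {s : ℕ → Bool} (D : Scheme h s) (b : Bool) :
    D.rung (h + b.toNat) = D.capPair b := by
  have := D.three_le
  cases b
  · rw [Bool.toNat_false, rung, if_neg (by omega), if_neg (by omega), if_pos (by omega)]
  · rw [Bool.toNat_true, rung, if_neg (by omega), if_neg (by omega), if_neg (by omega),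
      if_pos rfl]

theorem rung_of_lt {h : ℕ} {s : ℕ → Bool} (D : Scheme h s) {j : ℕ} (hj : 2 ≤ j) (hj' : j < h) :
    D.rung j = D.rib j := by
  rw [rung, if_neg (by omega), if_neg (by omega), if_neg (by omega), if_neg (by omega)]

theorem leafSet_of_lt {h : ℕ} {s : ℕ → Bool} (D : Scheme h s) {j : ℕ} (hj : j < h) :
    D.leafSet j = (D.outer j).colors := by
  rw [leafSet, if_neg (by omega), if_neg (by omega)]

theorem leafSet_toNat {h : ℕ} {s : ℕ → Bool} (D : Scheme h s) (b : Bool) :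
    D.leafSet b.toNat = ((D.cut 1).side b).colors := by
  have := D.three_le
  have := Bool.toNat_le b
  rw [leafSet_of_lt D (by omega), outer_toNat]

theorem leafSet_add_toNat {h : ℕ} {s : ℕ → Bool} (D : Scheme h s) (b : Bool) :
    D.leafSet (h + b.toNat) = sideColors (D.cut (h - 1)) D.cap D.capPair b := by
  cases b <;> simp [leafSet]

theorem spineSet_of_lt {h : ℕ} {s : ℕ → Bool} (D : Scheme h s) {i : ℕ} (hi : i < h) :
    D.spineSet i = (D.cut i).spine.colors := by
  rw [spineSet, if_neg (by omega)]

theorem spineSet_self {h : ℕ} {s : ℕ → Bool} (D : Scheme h s) :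
    D.spineSet h = spineColors (D.cut (h - 1)) D.capPair := by
  rw [spineSet, if_pos rfl]

theorem spineSet_one {h : ℕ} {s : ℕ → Bool} (D : Scheme h s) :
    D.spineSet 1 = {(D.cut 1).spine.color, D.basePair false, D.basePair true} := by
  have := D.three_le
  rw [spineSet_of_lt D (by omega), Wire.colors, D.start.2.1]

theorem spineSet_succ {h : ℕ} {s : ℕ → Bool} (D : Scheme h s) {i : ℕ} (hi : 1 ≤ i)
    (hi' : i + 1 < h) :
    D.spineSet (i + 1) = {(D.cut (i + 1)).spine.color, (D.cut i).spine.color, D.rib (i + 1)} := by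
  rw [spineSet_of_lt D hi', Wire.colors, (D.step i hi hi').1.1]

theorem leafSet_succ {h : ℕ} {s : ℕ → Bool} (D : Scheme h s) {j : ℕ} (hj : 1 ≤ j)
    (hj' : j + 1 < h) :
    D.leafSet (j + 1) = {(D.outer (j + 1)).color, ((D.cut j).side (side h s (j + 1))).color,
      D.rib (j + 1)} := by
  rw [leafSet_of_lt D hj', Wire.colors, outer_of_pos D (by omega), side_mid s (by omega) hj',
    (D.step j hj hj').2.1.1]

theorem leafSet_start {h : ℕ} {s : ℕ → Bool} (D : Scheme h s) (b : Bool) :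
    D.leafSet b.toNat = {((D.cut 1).side b).color, D.base, D.basePair b} := by
  rw [leafSet_toNat, Wire.colors, (D.start.2.2.2 b).2.2.2.2.1]

theorem outer_weaken {h : ℕ} {s : ℕ → Bool} (D : Scheme h s) {j i : ℕ} (hji : max j 1 ≤ i)
    (hi : i < h) (hside : ∀ l, j < l → l ≤ i → side h s l ≠ side h s j) :
    (D.outer j).Weaken ((D.cut i).side (side h s j)) := by
  induction i, hji using Nat.le_induction with
  | base => exact ⟨rfl, rfl, Finset.Subset.refl _⟩
  | succ i hji ih =>
    refine (ih (by omega) fun l hl hl' => hside l hl (by omega)).trans ?_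
    have hs := hside (i + 1) (by omega) le_rfl
    rw [side_mid s (by omega) hi] at hs
    have := (D.step i (by omega) hi).2.2
    rwa [← Bool.eq_not_of_ne hs.symm] at this

theorem link_weaken {h : ℕ} {s : ℕ → Bool} (D : Scheme h s) {j m : ℕ} (hl : Link h s j m)
    (hm : m ≤ h + 1) :
    (D.outer j).Weaken ((D.cut (min (m - 1) (h - 1))).side (side h s m)) := by
  have h3 := D.three_le
  have h1 := hl.left_lt hm
  have h2 := hl.two_le h3
  have h4 := hl.1
  rw [← hl.2.1]
  refine outer_weaken D (by omega) (by omega) fun l hl1 hl2 => ?_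
  rw [hl.2.1]
  exact hl.2.2 l hl1 (by omega)

theorem notMem_spineSet {h : ℕ} {s : ℕ → Bool} (D : Scheme h s) {i : ℕ} (hi : 1 ≤ i) (hi' : i < h) :
    ∀ c ∈ (D.cut i).spine.forbidden, c ∉ D.spineSet (i + 1) := by
  by_cases h1 : i + 1 = h
  · rw [h1, spineSet_self, show i = h - 1 by omega]
    exact D.close.2.1
  · rw [spineSet_of_lt D (by omega)]
    exact (D.step i hi (by omega)).1.2.2.2.2.1

theorem notMem_leafSet {h : ℕ} {s : ℕ → Bool} (D : Scheme h s) {j m : ℕ} (hl : Link h s j m)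
    (hm : m ≤ h + 1) : ∀ c ∈ (D.outer j).forbidden, c ∉ D.leafSet m := by
  have h2 := hl.two_le D.three_le
  intro c hc
  have hc' := (D.link_weaken hl hm).2.2 hc
  by_cases h1 : m < h
  · obtain ⟨n, rfl⟩ := Nat.exists_eq_add_of_le' (show 1 ≤ m by omega)
    rw [leafSet_of_lt D h1, outer_of_pos D (by omega)]
    rw [min_eq_left (by omega), Nat.add_sub_cancel] at hc'
    rw [side_mid s h2 h1] at hc' ⊢
    exact (D.step n (by omega) h1).2.1.2.2.2.2.1 c hc'
  · obtain ⟨b, rfl⟩ : ∃ b : Bool, m = h + b.toNat := by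
      by_cases h4 : m = h
      · exact ⟨false, by simp [h4]⟩
      · exact ⟨true, by rw [Bool.toNat_true]; omega⟩
    rw [leafSet_add_toNat]
    rw [side_add_toNat, min_eq_right (by omega)] at hc'
    exact (D.close.2.2.2 b).2.2.2.2.1 c hc'

theorem dart_next {h : ℕ} {s : ℕ → Bool} (D : Scheme h s) {j m : Fin (h + 2)}
    (hl : Link h s j m) :
    D.dart (Sum.inr j) (Sum.inr m) = ((D.outer j).color, D.leafSet m) := by
  have h1 := hl.left_lt (by omega)
  have h2 := hl.two_le D.three_le
  have h3 := hl.1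
  rw [dart, color, exteriorColor, min_eq_left (by omega), max_eq_right (by omega),
    if_neg (by omega), if_neg (by omega)]
  rfl

theorem dart_prev {h : ℕ} {s : ℕ → Bool} (D : Scheme h s) {k j : Fin (h + 2)}
    (hl : Link h s k j) :
    D.dart (Sum.inr j) (Sum.inr k) =
      (((D.cut (min (j - 1) (h - 1))).side (side h s j)).color,
        ((D.cut (min (j - 1) (h - 1))).side (side h s j)).colors) := by
  have h1 := hl.left_lt (by omega)
  have h2 := hl.two_le D.three_le
  have h3 := hl.1
  have h4 := D.link_weaken hl (by omega)
  rw [dart, color, exteriorColor, min_eq_right (by omega), max_eq_left (by omega),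
    if_neg (by omega), if_neg (by omega), h4.1, h4.colors_eq, ← leafSet_of_lt D h1]
  rfl

theorem leaf_cases {h j : ℕ} (hj : j < h + 2) :
    (∃ b : Bool, j = b.toNat) ∨ (2 ≤ j ∧ j < h) ∨ ∃ b : Bool, j = h + b.toNat := by
  by_cases h0 : j = 0
  · exact Or.inl ⟨false, h0⟩
  by_cases h1 : j = 1
  · exact Or.inl ⟨true, h1⟩
  by_cases h2 : j = h
  · exact Or.inr (Or.inr ⟨false, h2⟩)
  by_cases h3 : j = h + 1
  · exact Or.inr (Or.inr ⟨true, h3⟩)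
  · exact Or.inr (Or.inl (by omega))

theorem exteriorColor_base {h : ℕ} {s : ℕ → Bool} (D : Scheme h s) :
    D.exteriorColor 0 1 = D.base := if_pos rfl

theorem exteriorColor_cap {h : ℕ} {s : ℕ → Bool} (D : Scheme h s) :
    D.exteriorColor h (h + 1) = D.cap := by
  have := D.three_le
  rw [exteriorColor, if_neg (by omega), if_pos rfl]

/-- `v` is the leaf `u_n`. -/
def IsLeaf {h : ℕ} (n : ℕ) (v : CatVert h) : Prop := ∃ j : Fin (h + 2), j.val = n ∧ v = Sum.inr j

/-- `v` is the spine vertex `v_n`. -/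
def IsSpine {h : ℕ} (n : ℕ) (v : CatVert h) : Prop := ∃ i : Fin h, i.val + 1 = n ∧ v = Sum.inl i

theorem IsLeaf.unique {h n : ℕ} (v w : CatVert h) (hv : IsLeaf n v) (hw : IsLeaf n w) : v = w := by
  obtain ⟨j, e, rfl⟩ := hv
  obtain ⟨j', e', rfl⟩ := hw
  rw [Fin.ext (e.trans e'.symm)]

theorem IsSpine.unique {h n : ℕ} (v w : CatVert h) (hv : IsSpine n v) (hw : IsSpine n w) :
    v = w := by
  obtain ⟨i, e, rfl⟩ := hv
  obtain ⟨i', e', rfl⟩ := hw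
  obtain rfl : i = i' := Fin.ext (by omega)
  rfl

/-- Distinct neighbors of a spine vertex have compatible darts. -/
theorem compatible_spine {h : ℕ} {s : ℕ → Bool} (D : Scheme h s) (i : Fin h) :
    ∀ v w, (caterpillarHalin h s).Adj (Sum.inl i) v → (caterpillarHalin h s).Adj (Sum.inl i) w →
      v ≠ w → Compatible (D.dart (Sum.inl i) v) (D.dart (Sum.inl i) w) := by
  have hh := D.three_le
  have next : ∀ v, IsSpine (i.val + 2) v → D.dart (Sum.inl i) v =
      ((D.cut (i.val + 1)).spine.color, D.spineSet (i.val + 2)) := by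
    rintro _ ⟨i', e, rfl⟩
    rw [dart, color, vertexColors, min_eq_left (by omega), e]
  have prev : ∀ v, IsSpine i.val v → D.dart (Sum.inl i) v =
      ((D.cut i.val).spine.color, (D.cut i.val).spine.colors) := by
    rintro _ ⟨i', e, rfl⟩
    rw [dart, color, vertexColors, min_eq_right (by omega), e, spineSet_of_lt D i.isLt]
  have rib : ∀ n v, IsLeaf n v → D.dart (Sum.inl i) v = (D.rung n, D.leafSet n) := by
    rintro _ _ ⟨j, rfl, rfl⟩
    rfl
  have adj : ∀ v, (caterpillarHalin h s).Adj (Sum.inl i) v →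
      IsSpine i.val v ∨ IsSpine (i.val + 2) v ∨
        ∃ j : Fin (h + 2), i.val = min (j.val - 1) (h - 1) ∧ v = Sum.inr j := by
    rintro (i' | j) hv
    · rcases adj_spine.1 hv with e | e
      · exact Or.inr (Or.inl ⟨i', by omega, rfl⟩)
      · exact Or.inl ⟨i', by omega, rfl⟩
    · exact Or.inr (Or.inr ⟨j, (adj_rung hh).1 hv, rfl⟩)
  by_cases h0 : i.val = 0
  · have rib0 : ∀ (b : Bool) v, IsLeaf b.toNat v → D.dart (Sum.inl i) v =
        (D.basePair b, ((D.cut 1).side b).colors) := fun b v hv => by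
      rw [rib _ v hv, rung_toNat, leafSet_toNat]
    have hR : ∀ (b : Bool) v w, IsLeaf b.toNat v → IsSpine (i.val + 2) w →
        Compatible (D.dart (Sum.inl i) v) (D.dart (Sum.inl i) w) := by
      intro b v w hv hw
      rw [rib0 b v hv, next w hw, h0]
      obtain ⟨-, e1, -, -, -, e2, -, -⟩ := D.start.2.2.2 b
      exact ⟨e1.symm, fun e => D.notMem_spineSet le_rfl (by omega) _ (e2 e.1) e.2⟩
    refine compatible_of_three (P := IsLeaf false.toNat) (Q := IsLeaf true.toNat)
      (R := IsSpine (i.val + 2)) ?_ IsLeaf.unique IsLeaf.unique IsSpine.unique ?_ (hR false)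
      (hR true)
    · intro v hv
      rcases adj v hv with ⟨i', e, -⟩ | e | ⟨j, e, rfl⟩
      · omega
      · exact Or.inr (Or.inr e)
      · by_cases hj : j.val = 0
        · exact Or.inl ⟨j, hj, rfl⟩
        · exact Or.inr (Or.inl ⟨j, by rw [Bool.toNat_true]; omega, rfl⟩)
    · intro v w hv hw
      rw [rib0 _ v hv, rib0 _ w hw]
      exact ⟨D.start.1, fun e => D.start.2.2.1 e.symm⟩
  by_cases h1 : i.val + 1 = h
  · have rib1 : ∀ (b : Bool) v, IsLeaf (h + b.toNat) v → D.dart (Sum.inl i) v =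
        (D.capPair b, sideColors (D.cut (h - 1)) D.cap D.capPair b) := fun b v hv => by
      rw [rib _ v hv, rung_add_toNat, leafSet_add_toNat]
    have hR : ∀ (b : Bool) v w, IsLeaf (h + b.toNat) v → IsSpine i.val w →
        Compatible (D.dart (Sum.inl i) v) (D.dart (Sum.inl i) w) := by
      intro b v w hv hw
      rw [rib1 b v hv, prev w hw, show i.val = h - 1 by omega]
      obtain ⟨-, e1, -, -, -, e2, -, -⟩ := D.close.2.2.2 b
      exact ⟨e1.symm, fun e => e2 e.symm⟩
    refine compatible_of_three (P := IsLeaf (h + false.toNat)) (Q := IsLeaf (h + true.toNat))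
      (R := IsSpine i.val) ?_ IsLeaf.unique IsLeaf.unique IsSpine.unique ?_ (hR false) (hR true)
    · intro v hv
      rcases adj v hv with e | ⟨i', e, -⟩ | ⟨j, e, rfl⟩
      · exact Or.inr (Or.inr e)
      · omega
      · by_cases hj : j.val = h
        · exact Or.inl ⟨j, hj, rfl⟩
        · exact Or.inr (Or.inl ⟨j, by rw [Bool.toNat_true]; omega, rfl⟩)
    · intro v w hv hw
      rw [rib1 _ v hv, rib1 _ w hw]
      exact ⟨D.close.1, fun e => D.close.2.2.1 e.symm⟩
  · obtain ⟨h2, h3, h4⟩ := (D.step i (by omega) (by omega)).1.compatible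
      (D.notMem_spineSet (by omega) (by omega))
    have rib2 : ∀ v, IsLeaf (i.val + 1) v → D.dart (Sum.inl i) v =
        (D.rib (i + 1), ((D.cut (i + 1)).side (s (i + 1))).colors) := fun v hv => by
      rw [rib _ v hv, rung_of_lt D (by omega) (by omega), leafSet_of_lt D (by omega),
        outer_of_pos D (by omega), side_mid s (by omega) (by omega)]
    refine compatible_of_three (P := IsSpine i.val) (Q := IsLeaf (i.val + 1))
      (R := IsSpine (i.val + 2)) ?_ IsSpine.unique IsLeaf.unique IsSpine.unique ?_ ?_ ?_
    · intro v hv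
      rcases adj v hv with e | e | ⟨j, e, rfl⟩
      · exact Or.inl e
      · exact Or.inr (Or.inr e)
      · exact Or.inr (Or.inl ⟨j, by omega, rfl⟩)
    · intro v w hv hw
      rwa [prev v hv, rib2 w hw]
    · intro v w hv hw
      rwa [prev v hv, next w hw]
    · intro v w hv hw
      rwa [rib2 v hv, next w hw]

/-- Distinct neighbors of a leaf have compatible darts. -/
theorem compatible_leaf {h : ℕ} {s : ℕ → Bool} (D : Scheme h s) (j : Fin (h + 2)) :
    ∀ v w, (caterpillarHalin h s).Adj (Sum.inr j) v → (caterpillarHalin h s).Adj (Sum.inr j) w →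
      v ≠ w → Compatible (D.dart (Sum.inr j) v) (D.dart (Sum.inr j) w) := by
  have hh := D.three_le
  let Prev : CatVert h → Prop := fun v => ∃ k : Fin (h + 2), Link h s k j ∧ v = Sum.inr k
  let Next : CatVert h → Prop := fun v => ∃ m : Fin (h + 2), Link h s j m ∧ v = Sum.inr m
  let Rung : CatVert h → Prop := IsSpine (min (j.val - 1) (h - 1) + 1)
  have prev_unique : ∀ v w, Prev v → Prev w → v = w := by
    rintro _ _ ⟨k, hk, rfl⟩ ⟨k', hk', rfl⟩
    rw [Fin.ext (hk.left_unique hk')]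
  have next_unique : ∀ v w, Next v → Next w → v = w := by
    rintro _ _ ⟨m, hm, rfl⟩ ⟨m', hm', rfl⟩
    rw [Fin.ext (hm.right_unique hm')]
  have rung : ∀ v, Rung v → D.dart (Sum.inr j) v =
      (D.rung j, D.spineSet (min (j.val - 1) (h - 1) + 1)) := by
    rintro _ ⟨i, e, rfl⟩
    rw [dart, color, vertexColors, e]
  have adj : ∀ v, (caterpillarHalin h s).Adj (Sum.inr j) v → Rung v ∨
      ∃ m : Fin (h + 2), (Exterior h s j m ∨ Exterior h s m j) ∧ v = Sum.inr m := by
    rintro (i | m) hv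
    · exact Or.inl ⟨i, by rw [(adj_rung hh).1 hv.symm], rfl⟩
    · exact Or.inr ⟨m, exterior_of_adj hh hv, rfl⟩
  rcases leaf_cases j.isLt with ⟨b, hb⟩ | ⟨h2, h3⟩ | ⟨b, hb⟩
  · have hle := Bool.toNat_le b
    obtain ⟨e1, e2, e3, e4, e5, e6, e7, e8, e9⟩ := D.start.2.2.2 b
    have rung' : ∀ v, Rung v → D.dart (Sum.inr j) v =
        (D.basePair b, (D.cut 1).spine.colors) := by
      intro v hv
      rw [rung v hv, hb, rung_toNat, min_eq_left (by omega), spineSet_of_lt D (by omega),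
        show b.toNat - 1 + 1 = 1 by omega]
    have other : ∀ v, IsLeaf (!b).toNat v → D.dart (Sum.inr j) v =
        (D.base, ((D.cut 1).side (!b)).colors) := by
      rintro _ ⟨m, e, rfl⟩
      rw [dart, color, vertexColors, e, hb, leafSet_toNat]
      cases b <;> exact congrArg (·, _) D.exteriorColor_base
    have next : ∀ m : Fin (h + 2), Link h s j m → D.dart (Sum.inr j) (Sum.inr m) =
        (((D.cut 1).side b).color, D.leafSet m) := by
      intro m hm
      rw [D.dart_next hm, hb, outer_toNat]
    have forb : ∀ m : Fin (h + 2), Link h s j m →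
        ∀ c ∈ ((D.cut 1).side b).forbidden, c ∉ D.leafSet m := by
      intro m hm
      rw [← outer_toNat, ← hb]
      exact D.notMem_leafSet hm (by omega)
    refine compatible_of_three (P := Rung) (Q := IsLeaf (!b).toNat) (R := Next) ?_
      IsSpine.unique IsLeaf.unique next_unique ?_ ?_ ?_
    · intro v hv
      rcases adj v hv with e | ⟨m, (⟨e, e'⟩ | ⟨e, e'⟩ | hl) | ⟨e, e'⟩ | ⟨e, e'⟩ | hl, rfl⟩
      · exact Or.inl e
      · refine Or.inr (Or.inl ⟨m, ?_, rfl⟩)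
        cases b <;> simp_all
      · omega
      · exact Or.inr (Or.inr ⟨m, hl, rfl⟩)
      · refine Or.inr (Or.inl ⟨m, ?_, rfl⟩)
        cases b <;> simp_all
      · omega
      · have := hl.two_le hh
        omega
    · intro v w hv hw
      rw [rung' v hv, other w hw]
      exact ⟨e1, fun e => e9 e.symm⟩
    · rintro v _ hv ⟨m, hm, rfl⟩
      rw [rung' v hv, next m hm]
      exact ⟨e4.symm, fun e => forb m hm _ (e7 e.1) e.2⟩
    · rintro v _ hv ⟨m, hm, rfl⟩
      rw [other v hv, next m hm]
      exact ⟨e3.symm, fun e => forb m hm _ (e8 e.1) e.2⟩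
  · obtain ⟨n, e⟩ := Nat.exists_eq_add_of_le' (show 1 ≤ j.val by omega)
    have hr := (D.step n (by omega) (by omega)).2.1
    have hmin : min (j.val - 1) (h - 1) = n := by omega
    have hside : side h s j = s (n + 1) := by rw [side_mid s h2 h3, e]
    have hout : D.outer j = (D.cut (n + 1)).side (s (n + 1)) := by
      rw [outer_of_pos D (by omega), hside, e]
    have rung' : ∀ v, Rung v → D.dart (Sum.inr j) v =
        (D.rib (n + 1), (D.cut (n + 1)).spine.colors) := by
      intro v hv
      rw [rung v hv, hmin, rung_of_lt D h2 h3, spineSet_of_lt D (by omega), e]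
    have prev : ∀ v, Prev v → D.dart (Sum.inr j) v =
        (((D.cut n).side (s (n + 1))).color, ((D.cut n).side (s (n + 1))).colors) := by
      rintro _ ⟨k, hk, rfl⟩
      rw [D.dart_prev hk, hmin, hside]
    have next : ∀ m : Fin (h + 2), Link h s j m → D.dart (Sum.inr j) (Sum.inr m) =
        (((D.cut (n + 1)).side (s (n + 1))).color, D.leafSet m) := by
      intro m hm
      rw [D.dart_next hm, hout]
    have forb : ∀ m : Fin (h + 2), Link h s j m →
        ∀ c ∈ ((D.cut (n + 1)).side (s (n + 1))).forbidden, c ∉ D.leafSet m := by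
      intro m hm
      rw [← hout]
      exact D.notMem_leafSet hm (by omega)
    refine compatible_of_three (P := Prev) (Q := Rung) (R := Next) ?_ prev_unique
      IsSpine.unique next_unique ?_ ?_ ?_
    · intro v hv
      rcases adj v hv with e | ⟨m, (⟨e, e'⟩ | ⟨e, e'⟩ | hl) | ⟨e, e'⟩ | ⟨e, e'⟩ | hl, rfl⟩
      · exact Or.inr (Or.inl e)
      · omega
      · omega
      · exact Or.inr (Or.inr ⟨m, hl, rfl⟩)
      · omega
      · omega
      · exact Or.inl ⟨m, hl, rfl⟩
    · intro v w hv hw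
      rw [prev v hv, rung' w hw]
      exact ⟨hr.2.1, hr.2.2.2.2.2.1⟩
    · rintro v _ hv ⟨m, hm, rfl⟩
      rw [prev v hv, next m hm]
      exact (hr.compatible (forb m hm)).2.1
    · rintro v _ hv ⟨m, hm, rfl⟩
      rw [rung' v hv, next m hm]
      exact (hr.compatible (forb m hm)).2.2
  · obtain ⟨e1, e2, e3, e4, e5, e6, e7, e8, e9⟩ := D.close.2.2.2 b
    have hle := Bool.toNat_le b
    have hmin : min (j.val - 1) (h - 1) = h - 1 := by omega
    have hside : side h s j = b := by rw [hb, side_add_toNat]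
    have rung' : ∀ v, Rung v → D.dart (Sum.inr j) v =
        (D.capPair b, spineColors (D.cut (h - 1)) D.capPair) := by
      intro v hv
      rw [rung v hv, hmin, hb, rung_add_toNat, Nat.sub_add_cancel (by omega), spineSet_self]
    have other : ∀ v, IsLeaf (h + (!b).toNat) v → D.dart (Sum.inr j) v =
        (D.cap, sideColors (D.cut (h - 1)) D.cap D.capPair (!b)) := by
      rintro _ ⟨m, e, rfl⟩
      rw [dart, color, vertexColors, e, hb, leafSet_add_toNat]
      cases b <;> simp [exteriorColor_cap]
    have prev : ∀ v, Prev v → D.dart (Sum.inr j) v =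
        (((D.cut (h - 1)).side b).color, ((D.cut (h - 1)).side b).colors) := by
      rintro _ ⟨k, hk, rfl⟩
      rw [D.dart_prev hk, hmin, hside]
    refine compatible_of_three (P := Rung) (Q := IsLeaf (h + (!b).toNat)) (R := Prev) ?_
      IsSpine.unique IsLeaf.unique prev_unique ?_ ?_ ?_
    · intro v hv
      rcases adj v hv with e | ⟨m, (⟨e, e'⟩ | ⟨e, e'⟩ | hl) | ⟨e, e'⟩ | ⟨e, e'⟩ | hl, rfl⟩
      · exact Or.inl e
      · omega
      · refine Or.inr (Or.inl ⟨m, ?_, rfl⟩)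
        cases b <;> simp_all
      · have := hl.left_lt (by omega)
        omega
      · omega
      · refine Or.inr (Or.inl ⟨m, ?_, rfl⟩)
        cases b <;> simp_all
      · exact Or.inr (Or.inr ⟨m, hl, rfl⟩)
    · intro v w hv hw
      rw [rung' v hv, other w hw]
      exact ⟨e1, fun e => e9 e.symm⟩
    · intro v w hv hw
      rw [rung' v hv, prev w hw]
      exact ⟨e4.symm, fun e => e7 e.symm⟩
    · intro v w hv hw
      rw [other v hv, prev w hw]
      exact ⟨e3.symm, fun e => e8 e.symm⟩

theorem color_mem_of_link {h : ℕ} {s : ℕ → Bool} (D : Scheme h s) {j m : Fin (h + 2)}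
    (hl : Link h s j m) :
    (D.outer j).color ∈ D.leafSet j ∧ (D.outer j).color ∈ D.leafSet m := by
  have hh := D.three_le
  have hj := hl.left_lt (by omega)
  have hm := hl.two_le hh
  refine ⟨by rw [leafSet_of_lt D hj]; exact Finset.mem_insert_self _ _, ?_⟩
  have hw := (D.link_weaken hl (by omega)).1
  rw [← hw]
  rcases leaf_cases m.isLt with ⟨b, e⟩ | ⟨h1, h2⟩ | ⟨b, e⟩
  · have := Bool.toNat_le b
    omega
  · obtain ⟨n, e⟩ := Nat.exists_eq_add_of_le' (show 1 ≤ m.val by omega)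
    rw [e, leafSet_succ D (by omega) (by omega), min_eq_left (by omega), Nat.add_sub_cancel]
    simp
  · rw [e, leafSet_add_toNat, side_add_toNat, min_eq_right (by omega)]
    exact Finset.mem_insert_self _ _

theorem color_mem {h : ℕ} {s : ℕ → Bool} (D : Scheme h s) (v w : CatVert h)
    (hvw : (caterpillarHalin h s).Adj v w) : D.color v w ∈ D.vertexColors v := by
  have hh := D.three_le
  have spine : ∀ i (hi : i + 1 < h), (D.cut (i + 1)).spine.color ∈ D.spineSet (i + 1) ∧
      (D.cut (i + 1)).spine.color ∈ D.spineSet (i + 2) := by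
    intro i hi
    refine ⟨by rw [spineSet_of_lt D hi]; exact Finset.mem_insert_self _ _, ?_⟩
    by_cases h1 : i + 2 = h
    · rw [h1, spineSet_self, show i + 1 = h - 1 by omega]
      exact Finset.mem_insert_self _ _
    · rw [spineSet_succ D (by omega) (by omega)]
      simp
  have rung : ∀ (i : Fin h) (j : Fin (h + 2)), i.val = min (j.val - 1) (h - 1) →
      D.rung j ∈ D.spineSet (i + 1) ∧ D.rung j ∈ D.leafSet j := by
    intro i j hij
    rcases leaf_cases j.isLt with ⟨b, e⟩ | ⟨h1, h2⟩ | ⟨b, e⟩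
    · have := Bool.toNat_le b
      rw [e, rung_toNat, leafSet_start, show i.val + 1 = 1 by omega, spineSet_one]
      cases b <;> simp
    · obtain ⟨n, e⟩ := Nat.exists_eq_add_of_le' (show 1 ≤ j.val by omega)
      rw [rung_of_lt D h1 h2, show i.val + 1 = j.val by omega, e,
        spineSet_succ D (by omega) (by omega), leafSet_succ D (by omega) (by omega)]
      simp
    · rw [e, rung_add_toNat, leafSet_add_toNat, show i.val + 1 = h by omega, spineSet_self]
      cases b <;> simp [spineColors, sideColors]
  have exterior : ∀ j m : Fin (h + 2), Exterior h s j m →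
      D.exteriorColor j m ∈ D.leafSet j ∧ D.exteriorColor j m ∈ D.leafSet m := by
    rintro j m (⟨e1, e2⟩ | ⟨e1, e2⟩ | hl)
    · rw [e1, e2, exteriorColor_base, ← Bool.toNat_true, ← Bool.toNat_false, leafSet_start,
        leafSet_start]
      simp
    · have e3 := leafSet_add_toNat D false
      rw [Bool.toNat_false, Nat.add_zero] at e3
      rw [e1, e2, exteriorColor_cap, e3, ← Bool.toNat_true, leafSet_add_toNat]
      simp [sideColors]
    · have h1 := hl.left_lt (by omega)
      have h2 := hl.two_le hh
      rw [exteriorColor, if_neg (by omega), if_neg (by omega)]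
      exact D.color_mem_of_link hl
  have exterior_lt : ∀ j m : Fin (h + 2), Exterior h s j m → j.val < m.val := by
    rintro j m (⟨e1, e2⟩ | ⟨e1, e2⟩ | hl)
    · omega
    · omega
    · exact hl.1
  rcases v with i | j <;> rcases w with i' | j'
  · rcases adj_spine.1 hvw with e | e
    · rw [color, min_eq_left (by omega)]
      exact (spine i (by omega)).1
    · rw [color, min_eq_right (by omega), vertexColors, e]
      exact (spine i' (by omega)).2
  · exact (rung i j' ((adj_rung hh).1 hvw)).1
  · exact (rung i' j ((adj_rung hh).1 hvw.symm)).2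
  · rcases exterior_of_adj hh hvw with e | e
    · have := exterior_lt _ _ e
      rw [color, min_eq_left (by omega), max_eq_right (by omega)]
      exact (exterior _ _ e).1
    · have := exterior_lt _ _ e
      rw [color, min_eq_right (by omega), max_eq_left (by omega)]
      exact (exterior _ _ e).2

theorem exists_star_five {h : ℕ} {s : ℕ → Bool} (D : Scheme h s) :
    ∃ c : Sym2 (CatVert h) → ℕ, IsStarEdgeColoring (caterpillarHalin h s) 5 c := by
  refine ⟨_, isStarEdgeColoring_of_compatible (f := Sym2.lift ⟨D.color, D.color_comm⟩)
    (C := D.vertexColors) D.color_mem ?_⟩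
  rintro (i | j) v w hv hw hvw
  · exact D.compatible_spine i v w hv hw hvw
  · exact D.compatible_leaf j v w hv hw hvw

end Scheme

end CaterpillarHalin

/-- For every `h ≥ 3` and every side assignment `s`, the caterpillar cubic Halin graph
`G(h, s)` has star chromatic index exactly 5: it admits a star 5-edge coloring but no
star 4-edge coloring. -/
theorem starChromaticIndex_caterpillarHalin (h : ℕ) (hh : 3 ≤ h) (s : ℕ → Bool) :
    (∃ c : Sym2 (CatVert h) → ℕ, IsStarEdgeColoring (caterpillarHalin h s) 5 c) ∧
    ¬ ∃ c : Sym2 (CatVert h) → ℕ, IsStarEdgeColoring (caterpillarHalin h s) 4 c := by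
  exact ⟨(CaterpillarHalin.exists_scheme hh s).elim fun D => D.exists_star_five,
    fun ⟨c, hc⟩ => CaterpillarHalin.not_star_four hh s c hc⟩
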